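/- Let ℓ be an odd prime and let G be a subgroup of GL₂(F_ℓ) such that every element of G is diagonalizable over F_ℓ (equivalently, every element lies in a conjugate of C_sp). Then one of the following holds: (0) G is contained in a conjugate of C_sp; (1) G is contained in a conjugate of N_sp; (2) the image H of G in PGL₂(F_ℓ) is isomorphic to A₄ and ℓ ≡ 1 (mod 12); (3) H is isomorphic to S₄ and ℓ ≡ 1 (mod 24); (4) H is isomorphic to A₅ and ℓ ≡ 1 (mod 60). -/

import Mathlib

open Matrix

abbrev GL2 (ℓ : ℕ) : Type := GL (Fin 2) (ZMod ℓ)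

/-- The underlying matrix of an element of `GL₂(F_ℓ)`. -/
def mat {ℓ : ℕ} (g : GL2 ℓ) : Matrix (Fin 2) (Fin 2) (ZMod ℓ) := g

/-- `g` is a diagonal matrix. -/
def IsDiag {ℓ : ℕ} (g : GL2 ℓ) : Prop := mat g 0 1 = 0 ∧ mat g 1 0 = 0

/-- `g` is an antidiagonal matrix. -/
def IsAnti {ℓ : ℕ} (g : GL2 ℓ) : Prop := mat g 0 0 = 0 ∧ mat g 1 1 = 0

/-- `g` is a scalar matrix. -/
def IsScalar {ℓ : ℕ} (g : GL2 ℓ) : Prop :=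
  ∃ c : ZMod ℓ, mat g = c • (1 : Matrix (Fin 2) (Fin 2) (ZMod ℓ))

/-- Membership in the split Cartan subgroup `C_sp` (the diagonal matrices). -/
def InCsp {ℓ : ℕ} (g : GL2 ℓ) : Prop := IsDiag g

/-- Membership in the normalizer `N_sp` of the split Cartan (diagonal or antidiagonal). -/
def InNsp {ℓ : ℕ} (g : GL2 ℓ) : Prop := IsDiag g ∨ IsAnti g

/-- Membership in the nonsplit Cartan `C_ns` w.r.t. the nonresidue `δ`:
matrices of the form `[[a, δb], [b, a]]`. -/
def InCns {ℓ : ℕ} (δ : ZMod ℓ) (g : GL2 ℓ) : Prop :=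
  mat g 1 1 = mat g 0 0 ∧ mat g 0 1 = δ * mat g 1 0

/-- Membership in `N_ns \ C_ns` (as a matrix shape): `[[a, -δb], [b, -a]]`. -/
def InNnsAnti {ℓ : ℕ} (δ : ZMod ℓ) (g : GL2 ℓ) : Prop :=
  mat g 1 1 = - mat g 0 0 ∧ mat g 0 1 = - (δ * mat g 1 0)

/-- Membership in the normalizer `N_ns` of the nonsplit Cartan. -/
def InNns {ℓ : ℕ} (δ : ZMod ℓ) (g : GL2 ℓ) : Prop := InCns δ g ∨ InNnsAnti δ g

/-- `PGL₂(F_ℓ)`: the quotient of `GL₂(F_ℓ)` by its center (the scalar matrices). -/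
abbrev PGL2 (ℓ : ℕ) : Type := GL2 ℓ ⧸ Subgroup.center (GL2 ℓ)

/-- The natural projection `GL₂(F_ℓ) →* PGL₂(F_ℓ)`. -/
def toPGL (ℓ : ℕ) : GL2 ℓ →* PGL2 ℓ := QuotientGroup.mk' _

/-- The image of a subgroup of `GL₂(F_ℓ)` in `PGL₂(F_ℓ)`. -/
def projImage {ℓ : ℕ} (G : Subgroup (GL2 ℓ)) : Subgroup (PGL2 ℓ) := G.map (toPGL ℓ)

/-- `H` is isomorphic to the alternating group `A₄`. -/
def IsA4 {ℓ : ℕ} (H : Subgroup (PGL2 ℓ)) : Prop := Nonempty (H ≃* alternatingGroup (Fin 4))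

/-- `H` is isomorphic to the symmetric group `S₄`. -/
def IsS4 {ℓ : ℕ} (H : Subgroup (PGL2 ℓ)) : Prop := Nonempty (H ≃* Equiv.Perm (Fin 4))

/-- `H` is isomorphic to the alternating group `A₅`. -/
def IsA5 {ℓ : ℕ} (H : Subgroup (PGL2 ℓ)) : Prop := Nonempty (H ≃* alternatingGroup (Fin 5))


def Inv2 (H X : Type*) [Group H] [MulAction H X] : Prop :=
  ∃ h : H, h ≠ 1 ∧ ∀ (g : H) (p : X), h • p = p → h • (g • p) = g • p

theorem burnside_two {H X : Type*} [Group H] [Finite H] [Finite X] [MulAction H X]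
    (hfix : ∀ h : H, h ≠ 1 → Nat.card (MulAction.fixedBy X h) = 2) :
    Nat.card X + 2 * (Nat.card H - 1) =
      Nat.card (MulAction.orbitRel.Quotient H X) * Nat.card H := by
  classical
  have := Fintype.ofFinite H
  have := Fintype.ofFinite X
  have := Fintype.ofFinite (MulAction.orbitRel.Quotient H X)
  have h := MulAction.sum_card_fixedBy_eq_card_orbits_mul_card_group H X
  simp only [Nat.card_eq_fintype_card] at *
  rw [← h, ← Finset.add_sum_erase Finset.univ _ (Finset.mem_univ (1 : H))]
  congr 1
  · simp
  · rw [Finset.sum_congr rfl (g := fun _ => 2)]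
    · simp [Finset.card_erase_of_mem, mul_comm]
    · intro x hx
      exact hfix x (Finset.ne_of_mem_erase hx)

theorem arith_wlog (n e₁ e₂ e₃ a₁ a₂ a₃ : ℕ)
    (h₁ : a₁ * e₁ = n) (h₂ : a₂ * e₂ = n) (h₃ : a₃ * e₃ = n)
    (l₁ : 2 ≤ e₁) (l₂ : e₁ ≤ e₂) (l₃ : e₂ ≤ e₃) (hs : a₁ + a₂ + a₃ = n + 2) :
    a₃ = 2 ∨ (n = 12 ∧ a₃ = 4) ∨ n = 24 ∨ (n = 60 ∧ e₁ = 2 ∧ e₂ = 3 ∧ e₃ = 5) := by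
  have e1 : e₁ = 2 := by
    by_contra hne
    have : 3 ≤ e₁ := by omega
    have : a₁ * 3 ≤ n := by nlinarith
    have : a₂ * 3 ≤ n := by nlinarith
    have : a₃ * 3 ≤ n := by nlinarith
    omega
  subst e1
  by_cases e2 : e₂ = 2
  · subst e2; left; omega
  have e2 : e₂ = 3 := by
    by_contra hne
    have : 4 ≤ e₂ := by omega
    have : a₂ * 4 ≤ n := by nlinarith
    have : a₃ * 4 ≤ n := by nlinarith
    omega
  subst e2
  have : e₃ < 6 := by
    by_contra hne
    have : a₃ * 6 ≤ n := by nlinarith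
    omega
  interval_cases e₃ <;> omega

def OneOrbit (H X : Type*) [Group H] [MulAction H X] : Prop :=
  (∀ x : X, Nat.card (MulAction.stabilizer H x) ∈ ({2, 3, 5} : Set ℕ)) ∧
  (∀ x y : X, Nat.card (MulAction.stabilizer H x) = 2 → Nat.card (MulAction.stabilizer H y) = 2 →
    ∃ g : H, g • x = y)

theorem card_stab_orbit {H X : Type*} [Group H] [Finite H] [Finite X] [MulAction H X] (x : X) :
    Nat.card (MulAction.orbit H x) * Nat.card (MulAction.stabilizer H x) = Nat.card H := by
  classical
  have := Fintype.ofFinite H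
  have := Fintype.ofFinite X
  simp only [Nat.card_eq_fintype_card]
  exact MulAction.card_orbit_mul_card_stabilizer_eq_card_group H x

theorem card_stab_smul {H X : Type*} [Group H] [MulAction H X] (x : X) (g : H) :
    Nat.card (MulAction.stabilizer H (g • x)) = Nat.card (MulAction.stabilizer H x) := by
  exact (Nat.card_congr (MulAction.stabilizerEquivStabilizer (g := g) (a := x) (b := g • x) rfl).toEquiv).symm

theorem inv2_of_orbit {H X : Type*} [Group H] [Finite H] [Finite X] [MulAction H X]
    (hfix : ∀ h : H, h ≠ 1 → Nat.card (MulAction.fixedBy X h) = 2)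
    (hst : ∀ x : X, ∃ h : H, h ≠ 1 ∧ h • x = x) (x : X)
    (hx : Nat.card (MulAction.orbit H x) = 2) : Inv2 H X := by
  obtain ⟨h, h1, hh⟩ := hst x
  have key : MulAction.orbit H x ⊆ MulAction.fixedBy X h := by
    intro y hy
    by_contra hne
    have hyx : y ≠ x := by rintro rfl; exact hne hh
    have hhy : h • y ∈ MulAction.orbit H x := by
      rw [MulAction.mem_orbit_iff] at *
      obtain ⟨g, rfl⟩ := hy
      exact ⟨h * g, mul_smul _ _ _⟩
    have h3 : ({x, y, h • y} : Set X).ncard = 3 := by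
      rw [Set.ncard_eq_three]
      refine ⟨x, y, h • y, hyx.symm, ?_, ?_, rfl⟩
      · intro he
        apply hyx
        rw [← hh] at he
        exact (smul_left_cancel h he).symm
      · exact fun he => hne he.symm
    have : ({x, y, h • y} : Set X) ⊆ MulAction.orbit H x := by
      intro z hz
      simp at hz
      rcases hz with rfl | rfl | rfl
      · exact MulAction.mem_orbit_self _
      · exact hy
      · exact hhy
    have := Set.ncard_le_ncard this (Set.toFinite _)
    rw [h3, ← Nat.card_coe_set_eq, hx] at this
    omega
  have heq : MulAction.orbit H x = MulAction.fixedBy X h := by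
    apply Set.eq_of_subset_of_ncard_le key _ (Set.toFinite _)
    rw [← Nat.card_coe_set_eq, ← Nat.card_coe_set_eq, hx, hfix h h1]
  refine ⟨h, h1, fun g p hp => ?_⟩
  have : p ∈ MulAction.fixedBy X h := hp
  rw [← heq] at this
  have : g • p ∈ MulAction.orbit H x := by
    rw [MulAction.mem_orbit_iff] at *
    obtain ⟨g', rfl⟩ := this
    exact ⟨g * g', mul_smul _ _ _⟩
  rw [heq] at this
  exact this

theorem core {H X : Type*} [Group H] [Finite H] [Finite X] [MulAction H X]
    (hfix : ∀ h : H, h ≠ 1 → Nat.card (MulAction.fixedBy X h) = 2)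
    (hst : ∀ x : X, ∃ h : H, h ≠ 1 ∧ h • x = x) (hnt : Nontrivial H) :
    Inv2 H X ∨ (Nat.card H = 12 ∧ ∃ x : X, Nat.card (MulAction.orbit H x) = 4) ∨
      Nat.card H = 24 ∨ (Nat.card H = 60 ∧ OneOrbit H X) := by
  classical
  have hB := burnside_two hfix
  have hn : 2 ≤ Nat.card H := Finite.one_lt_card
  have hst2 : ∀ x : X, 2 ≤ Nat.card (MulAction.stabilizer H x) := by
    intro x
    obtain ⟨h, h1, hh⟩ := hst x
    have : Nontrivial (MulAction.stabilizer H x) :=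
      ⟨⟨h, hh⟩, 1, fun he => h1 (congrArg Subtype.val he)⟩
    exact Finite.one_lt_card
  have := Fintype.ofFinite (MulAction.orbitRel.Quotient H X)
  have hsum : Nat.card X = ∑ ω : MulAction.orbitRel.Quotient H X,
      Nat.card (MulAction.orbit H ω.out) := by
    rw [Nat.card_congr (MulAction.selfEquivSigmaOrbits H X), Nat.card_sigma]
  obtain ⟨r, hr⟩ : ∃ r, r = Nat.card (MulAction.orbitRel.Quotient H X) := ⟨_, rfl⟩
  have hle : 2 * Nat.card X ≤ r * Nat.card H := by
    rw [hsum, hr, Finset.mul_sum, Nat.card_eq_fintype_card, ← Finset.card_univ, ← smul_eq_mul,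
      ← Finset.sum_const]
    apply Finset.sum_le_sum
    intro ω _
    have := card_stab_orbit (H := H) ω.out
    nlinarith [hst2 ω.out]
  rw [← hr] at hB
  generalize hN : Nat.card H = n at *
  have hr4 : r < 4 := by
    by_contra hc
    have : 4 * n ≤ r * n := Nat.mul_le_mul_right _ (by omega)
    omega
  interval_cases r
  · omega
  · -- r = 1
    have : Nat.card X = 0 := by omega
    have h1 : ∃ h : H, h ≠ 1 := exists_ne 1
    obtain ⟨h, h1⟩ := h1
    have h2 := hfix h h1
    have : IsEmpty X := by
      rcases Nat.card_eq_zero.1 this with h | h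
      · exact h
      · exact absurd h (not_infinite_iff_finite.2 inferInstance)
    simp at h2
  · have hX : Nat.card X = 2 := by omega
    left
    obtain ⟨h, h1⟩ : ∃ h : H, h ≠ 1 := exists_ne 1
    have : MulAction.fixedBy X h = Set.univ := by
      apply Set.eq_of_subset_of_ncard_le (Set.subset_univ _) _ (Set.toFinite _)
      rw [Set.ncard_univ, ← Nat.card_coe_set_eq, hX, hfix h h1]
    refine ⟨h, h1, fun g p _ => ?_⟩
    have h' : g • p ∈ MulAction.fixedBy X h := by rw [this]; trivial
    exact h'
  · have hX : Nat.card X = n + 2 := by omega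
    obtain ⟨e⟩ : Nonempty (MulAction.orbitRel.Quotient H X ≃ Fin 3) := by
      rw [← Finite.card_eq, ← hr]; simp
    let q : Fin 3 → X := fun i => (e.symm i).out
    have hq : ∀ x : X, ∃ i, ∃ g : H, g • q i = x := by
      intro x
      refine ⟨e (Quotient.mk _ x), ?_⟩
      simp only [q, Equiv.symm_apply_apply]
      have := Quotient.mk_out (s := MulAction.orbitRel H X) x
      rw [MulAction.orbitRel_apply] at this
      exact MulAction.mem_orbit_iff.1 (MulAction.mem_orbit_symm.1 this)
    rw [← Equiv.sum_comp e.symm] at hsum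
    -- sort
    let E : Fin 3 → ℕ := fun i => Nat.card (MulAction.stabilizer H (q i))
    let σ := Tuple.sort E
    have hmono : Monotone (E ∘ σ) := Tuple.monotone_sort E
    let A : Fin 3 → ℕ := fun i => Nat.card (MulAction.orbit H (q i))
    have hAE : ∀ i, A i * E i = n := fun i => by rw [← hN]; exact card_stab_orbit _
    have hsum' : A (σ 0) + A (σ 1) + A (σ 2) = n + 2 := by
      rw [← hX, hsum, ← Equiv.sum_comp σ, Fin.sum_univ_three]
    have := arith_wlog n _ _ _ _ _ _ (hAE (σ 0)) (hAE (σ 1)) (hAE (σ 2)) (hst2 _)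
      (hmono (by decide)) (hmono (by decide)) hsum'
    rcases this with h | h | h | ⟨h, e0, e1, e2⟩
    · left
      exact inv2_of_orbit hfix hst _ h
    · right; left
      exact ⟨h.1, _, h.2⟩
    · right; right; left; exact h
    · right; right; right
      refine ⟨h, ?_, ?_⟩
      · intro x
        obtain ⟨i, g, rfl⟩ := hq x
        rw [card_stab_smul]
        obtain ⟨j, rfl⟩ := σ.surjective i
        change E (σ j) ∈ _
        fin_cases j
        · change E (σ 0) ∈ _
          simp [e0]
        · change E (σ 1) ∈ _
          simp [e1]
        · change E (σ 2) ∈ _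
          simp [e2]
      · have main : ∀ x, Nat.card (MulAction.stabilizer H x) = 2 → ∃ g : H, g • q (σ 0) = x := by
          intro x
          obtain ⟨i, g, rfl⟩ := hq x
          rw [card_stab_smul]
          obtain ⟨j, rfl⟩ := σ.surjective i
          intro hj
          change E (σ j) = 2 at hj
          have : j = 0 := by
            fin_cases j
            · rfl
            · change E (σ 1) = 2 at hj
              omega
            · change E (σ 2) = 2 at hj
              omega
          subst this
          exact ⟨g, rfl⟩
        intro x y hx hy
        obtain ⟨g, rfl⟩ := main x hx
        obtain ⟨k, rfl⟩ := main y hy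
        exact ⟨k * g⁻¹, by simp [mul_smul]⟩

theorem to_alt {H α : Type*} [Group H] [Finite H] [Finite α] (m : ℕ)
    (f : H →* Equiv.Perm α) (hf : Function.Injective f) (hα : Nat.card α = m)
    (hc : 2 * Nat.card H = m.factorial) : Nonempty (H ≃* alternatingGroup (Fin m)) := by
  classical
  obtain ⟨e⟩ : Nonempty (α ≃ Fin m) := by
    rw [← Finite.card_eq, hα]; simp
  let f' : H →* Equiv.Perm (Fin m) := (e.permCongrHom.toMonoidHom).comp f
  have hf' : Function.Injective f' := e.permCongrHom.injective.comp hf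
  have hr : f'.range.index = 2 := by
    have h1 := f'.range.card_mul_index
    rw [Nat.card_congr (MonoidHom.ofInjective hf').symm.toEquiv, Nat.card_perm, Nat.card_fin,
      ← hc] at h1
    have : 0 < Nat.card H := Nat.card_pos
    nlinarith
  have := Equiv.Perm.eq_alternatingGroup_of_index_eq_two hr
  exact ⟨(MonoidHom.ofInjective hf').trans (MulEquiv.subgroupCongr this)⟩

theorem to_sym {H α : Type*} [Group H] [Finite H] [Finite α] (m : ℕ)
    (f : H →* Equiv.Perm α) (hf : Function.Injective f) (hα : Nat.card α = m)
    (hc : Nat.card H = m.factorial) : Nonempty (H ≃* Equiv.Perm (Fin m)) := by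
  classical
  obtain ⟨e⟩ : Nonempty (α ≃ Fin m) := by
    rw [← Finite.card_eq, hα]; simp
  let f' : H →* Equiv.Perm (Fin m) := (e.permCongrHom.toMonoidHom).comp f
  have hf' : Function.Injective f' := e.permCongrHom.injective.comp hf
  have hb : Function.Bijective f' := by
    rw [Nat.bijective_iff_injective_and_card]
    refine ⟨hf', ?_⟩
    rw [hc, Nat.card_perm, Nat.card_fin]
  exact ⟨MulEquiv.ofBijective f' hb⟩

theorem inv2_of_normal_prime {H X : Type*} [Group H] [Finite H] [MulAction H X]
    (K : Subgroup H) (hK : K.Normal) (hp : (Nat.card K).Prime) : Inv2 H X := by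
  haveI := Fact.mk hp
  have hnt : Nontrivial K := Finite.one_lt_card_iff_nontrivial.1 hp.one_lt
  obtain ⟨⟨h, hhK⟩, h1⟩ := exists_ne (1 : K)
  have h1' : h ≠ 1 := fun he => h1 (Subtype.ext he)
  refine ⟨h, h1', fun g p hgp => ?_⟩
  have hmem : g⁻¹ * h * g ∈ K := by
    have := hK.conj_mem h hhK g⁻¹
    simpa using this
  have hz : (⟨g⁻¹ * h * g, hmem⟩ : K) ∈ Subgroup.zpowers (⟨h, hhK⟩ : K) :=
    mem_zpowers_of_prime_card rfl h1
  obtain ⟨k, hk⟩ := hz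
  have hk' : h ^ k = g⁻¹ * h * g := by
    have := congrArg Subtype.val hk
    simpa using this
  have hfix : (g⁻¹ * h * g) • p = p := by
    rw [← hk']
    have : h ∈ MulAction.stabilizer H p := hgp
    exact Subgroup.zpow_mem _ this k
  have : g • ((g⁻¹ * h * g) • p) = g • p := by rw [hfix]
  rw [← mul_smul] at this
  rw [← mul_smul, ← this]
  congr 1
  group

/-- the kernel of the action on Sylow subgroups contains no Sylow subgroup, if there are several -/
theorem sylow_ker {H : Type*} [Group H] [Finite H] (p : ℕ) [Fact p.Prime]
    (h1 : Nat.card (Sylow p H) ≠ 1) (P : Sylow p H) :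
    ¬ (P : Subgroup H) ≤ (MulAction.toPermHom H (Sylow p H)).ker := by
  intro hP
  apply h1
  rw [Nat.card_eq_one_iff_unique]
  refine ⟨⟨fun Q R => ?_⟩, ⟨P⟩⟩
  have key : ∀ Q : Sylow p H, P = Q := by
    intro Q
    have : (P : Subgroup H) ≤ Subgroup.normalizer (Q : Set H) := by
      intro x hx
      have := hP hx
      rw [← Sylow.smul_eq_iff_mem_normalizer]
      rw [MonoidHom.mem_ker] at this
      have := congrArg (fun s => s Q) this
      simpa using this
    have h2 : (P : Subgroup H) ≤ Q := by
      have h3 := P.isPGroup'.inf_normalizer_sylow Q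
      have h4 : (P : Subgroup H) ≤ (P : Subgroup H) ⊓ Subgroup.normalizer (Q : Set H) := le_inf le_rfl this
      rw [h3] at h4
      exact h4.trans inf_le_right
    exact Sylow.ext (P.is_maximal' Q.isPGroup' h2).symm
  rw [← key Q, ← key R]

theorem sylow_ker_card {H : Type*} [Group H] [Finite H] (p : ℕ) [Fact p.Prime] :
    Nat.card (MulAction.toPermHom H (Sylow p H)).ker * Nat.card (Sylow p H) ∣ Nat.card H := by
  have P : Sylow p H := default
  rw [P.card_eq_index_normalizer]
  have hle : (MulAction.toPermHom H (Sylow p H)).ker ≤ Subgroup.normalizer (P : Set H) := by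
    intro x hx
    rw [← Sylow.smul_eq_iff_mem_normalizer]
    rw [MonoidHom.mem_ker] at hx
    have := congrArg (fun s => s P) hx
    simpa using this
  rw [← (Subgroup.normalizer (P : Set H)).card_mul_index]
  exact Nat.mul_dvd_mul_right (Subgroup.card_dvd_of_le hle) _

theorem case24 {H X : Type*} [Group H] [Finite H] [MulAction H X] (hn : Nat.card H = 24) :
    Inv2 H X ∨ Nonempty (H ≃* Equiv.Perm (Fin 4)) := by
  classical
  haveI : Fact (Nat.Prime 3) := ⟨by norm_num⟩
  have P : Sylow 3 H := default
  have hPc : Nat.card P = 3 := by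
    have := P.card_eq_multiplicity
    rw [hn] at this
    rw [this]
    have : Nat.factorization 24 3 = 1 := by
      have : (24 : ℕ) = 3 ^ 1 * 8 := by norm_num
      rw [Nat.factorization_def _ (by norm_num), this, padicValNat.mul (by norm_num) (by norm_num),
        padicValNat.prime_pow, padicValNat.eq_zero_of_not_dvd (by norm_num)]
    rw [this]; norm_num
  have hidx : (P : Subgroup H).index = 8 := by
    have := (P : Subgroup H).card_mul_index
    rw [hn] at this
    have h : Nat.card (P : Subgroup H) = 3 := hPc
    rw [h] at this
    omega
  have hd : Nat.card (Sylow 3 H) ∣ 8 := hidx ▸ P.card_dvd_index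
  have hm := card_sylow_modEq_one 3 H
  have hcases : Nat.card (Sylow 3 H) = 1 ∨ Nat.card (Sylow 3 H) = 4 := by
    have hle := Nat.le_of_dvd (by norm_num) hd
    unfold Nat.ModEq at hm
    generalize Nat.card (Sylow 3 H) = m at *
    interval_cases m <;> omega
  rcases hcases with h | h
  · left
    have hN : (P : Subgroup H).Normal := by
      have := P.card_eq_index_normalizer
      rw [h] at this
      rw [← Subgroup.normalizer_eq_top_iff]
      exact Subgroup.index_eq_one.1 this.symm
    exact inv2_of_normal_prime P hN (by rw [show Nat.card (P : Subgroup H) = 3 from hPc]; norm_num)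
  · have hK := sylow_ker_card (H := H) 3
    rw [h, hn] at hK
    let K := (MulAction.toPermHom H (Sylow 3 H)).ker
    change Nat.card K * 4 ∣ 24 at hK
    have h6 : Nat.card K ∣ 6 := by
      obtain ⟨c, hc⟩ := hK
      exact ⟨c, by linarith⟩
    have h3 : ¬ 3 ∣ Nat.card K := by
      intro h3
      obtain ⟨x, hx⟩ := exists_prime_orderOf_dvd_card' 3 h3
      have hx' : orderOf (x : H) = 3 := by simpa using hx
      let Q : Sylow 3 H := Sylow.ofCard (Subgroup.zpowers (x : H)) (by
        rw [Nat.card_zpowers, hx', ← P.card_eq_multiplicity, hPc])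
      apply sylow_ker 3 (by omega) Q
      change Subgroup.zpowers (x : H) ≤ _
      rw [Subgroup.zpowers_le]
      exact x.2
    have hle := Nat.le_of_dvd (by norm_num) h6
    have : Nat.card K = 1 ∨ Nat.card K = 2 := by
      generalize Nat.card K = m at *
      interval_cases m <;> omega
    rcases this with h1 | h2
    · right
      refine to_sym 4 (MulAction.toPermHom H (Sylow 3 H)) ?_ h (by rw [hn]; rfl)
      rw [← MonoidHom.ker_eq_bot_iff]
      exact Subgroup.card_eq_one.1 h1
    · left
      exact inv2_of_normal_prime K inferInstance (by rw [h2]; norm_num)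

theorem case12 {H X : Type*} [Group H] [Finite H] [Finite X] [MulAction H X]
    (hfix : ∀ h : H, h ≠ 1 → Nat.card (MulAction.fixedBy X h) = 2)
    (hn : Nat.card H = 12) (x : X) (hx : Nat.card (MulAction.orbit H x) = 4) :
    Nonempty (H ≃* alternatingGroup (Fin 4)) := by
  refine to_alt 4 (MulAction.toPermHom H (MulAction.orbit H x)) ?_ hx
    (by rw [hn]; rfl)
  rw [injective_iff_map_eq_one]
  intro h hh
  by_contra h1
  have : MulAction.orbit H x ⊆ MulAction.fixedBy X h := by
    intro y hy
    have := congrArg (fun s => ((s ⟨y, hy⟩ : MulAction.orbit H x) : X)) hh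
    simpa using this
  have := Set.ncard_le_ncard this (Set.toFinite _)
  rw [← Nat.card_coe_set_eq, ← Nat.card_coe_set_eq, hx, hfix h h1] at this
  omega

theorem case60 {H X : Type*} [Group H] [Finite H] [Finite X] [MulAction H X]
    (hfix : ∀ h : H, h ≠ 1 → Nat.card (MulAction.fixedBy X h) = 2)
    (hn : Nat.card H = 60) (ho : OneOrbit H X) :
    Inv2 H X ∨ Nonempty (H ≃* alternatingGroup (Fin 5)) := by
  classical
  haveI : Fact (Nat.Prime 2) := ⟨by norm_num⟩
  obtain ⟨hstab, horb⟩ := ho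
  have hPc : ∀ P : Sylow 2 H, Nat.card (P : Subgroup H) = 4 := by
    intro P
    have := P.card_eq_multiplicity
    rw [hn] at this
    have h2 : Nat.factorization 60 2 = 2 := by
      have : (60 : ℕ) = 2 ^ 2 * 15 := by norm_num
      rw [Nat.factorization_def _ (by norm_num), this, padicValNat.mul (by norm_num) (by norm_num),
        padicValNat.prime_pow, padicValNat.eq_zero_of_not_dvd (by norm_num)]
    rw [h2] at this
    exact this
  have hfp : ∀ h : H, h ≠ 1 → ∃ p : X, h • p = p := by
    intro h h1
    have h2 := hfix h h1
    have : Nonempty (MulAction.fixedBy X h) := by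
      by_contra hc
      rw [not_nonempty_iff] at hc
      simp at h2
    obtain ⟨p, hp⟩ := this
    exact ⟨p, hp⟩
  -- elements with order dividing 4
  have hord : ∀ t : H, t ≠ 1 → orderOf t ∣ 4 → ∀ p : X, t • p = p →
      Nat.card (MulAction.stabilizer H p) = 2 := by
    intro t t1 ht p hp
    have hd : orderOf t ∣ Nat.card (MulAction.stabilizer H p) :=
      Subgroup.orderOf_dvd_natCard _ hp
    have h1 : orderOf t ≠ 1 := by rwa [Ne, orderOf_eq_one_iff]
    have h2 : orderOf t ∣ Nat.gcd 4 (Nat.card (MulAction.stabilizer H p)) := Nat.dvd_gcd ht hd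
    have := hstab p
    simp only [Set.mem_insert_iff, Set.mem_singleton_iff] at this
    rcases this with h | h | h
    · exact h
    · rw [h] at h2; norm_num at h2; exact absurd h2 t1
    · rw [h] at h2; norm_num at h2; exact absurd h2 t1
  have hconj : ∀ s t : H, s ≠ 1 → t ≠ 1 → orderOf s ∣ 4 → orderOf t ∣ 4 →
      ∃ g : H, g * s * g⁻¹ = t := by
    intro s t s1 t1 hs ht
    obtain ⟨p, hp⟩ := hfp s s1
    obtain ⟨q, hq⟩ := hfp t t1
    have hps := hord s s1 hs p hp
    have hqs := hord t t1 ht q hq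
    obtain ⟨g, hg⟩ := horb p q hps hqs
    refine ⟨g, ?_⟩
    have hm : (g * s * g⁻¹) • q = q := by
      rw [← hg, ← mul_smul, inv_mul_cancel_right, mul_smul, hp]
    have hne : g * s * g⁻¹ ≠ 1 := by
      intro he
      apply s1
      exact conj_eq_one_iff.1 he
    obtain ⟨u, v, huv, huniv⟩ := Nat.card_eq_two_iff.1 hqs
    have hall : ∀ w : MulAction.stabilizer H q, w ≠ 1 → w = ⟨t, hq⟩ := by
      intro w hw
      have ht' : (⟨t, hq⟩ : MulAction.stabilizer H q) ≠ 1 := fun he => t1 (congrArg Subtype.val he)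
      have a1 : w ∈ ({u, v} : Set _) := by rw [huniv]; trivial
      have a2 : (⟨t, hq⟩ : MulAction.stabilizer H q) ∈ ({u, v} : Set _) := by rw [huniv]; trivial
      have a3 : (1 : MulAction.stabilizer H q) ∈ ({u, v} : Set _) := by rw [huniv]; trivial
      simp only [Set.mem_insert_iff, Set.mem_singleton_iff] at a1 a2 a3
      grind
    have := hall ⟨g * s * g⁻¹, hm⟩ (fun he => hne (congrArg Subtype.val he))
    exact congrArg Subtype.val this
  have hcent : ∀ t : H, t ≠ 1 → orderOf t ∣ 4 → Nat.card (Subgroup.centralizer {t}) ≤ 4 := by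
    intro t t1 ht
    obtain ⟨p, hp⟩ := hfp t t1
    have hps := hord t t1 ht p hp
    have h1 := card_stab_orbit (H := Subgroup.centralizer {t}) p
    have h2 : Nat.card (MulAction.orbit (Subgroup.centralizer {t}) p) ≤ 2 := by
      rw [← hfix t t1]
      apply Nat.card_mono (Set.toFinite _)
      rintro _ ⟨⟨g, hg⟩, rfl⟩
      rw [Subgroup.mem_centralizer_singleton_iff] at hg
      change t • (g • p) = g • p
      rw [← mul_smul, ← hg, mul_smul, hp]
    have h3 : Nat.card (MulAction.stabilizer (Subgroup.centralizer {t}) p) ≤ 2 := by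
      rw [← hps]
      refine Nat.card_le_card_of_injective
        (fun g => (⟨g.1.1, g.2⟩ : MulAction.stabilizer H p)) ?_
      intro a b hab
      exact Subtype.ext (Subtype.ext (Subtype.mk.inj hab))
    rw [← h1]
    exact Nat.mul_le_mul h2 h3
  have hPo : ∀ P : Sylow 2 H, ∀ t ∈ P, orderOf t ∣ 4 := by
    intro P t ht
    rw [← hPc P]
    exact Subgroup.orderOf_dvd_natCard _ ht
  have hPC : ∀ P : Sylow 2 H, ∀ t ∈ P, t ≠ 1 → (P : Subgroup H) = Subgroup.centralizer {t} := by
    intro P t ht t1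
    apply Subgroup.eq_of_le_of_card_ge
    · intro x hx
      rw [Subgroup.mem_centralizer_singleton_iff]
      have := (IsPGroup.commGroupOfCardEqPrimeSq (p := 2) (G := P) (hPc P)).mul_comm ⟨x, hx⟩ ⟨t, ht⟩
      exact congrArg Subtype.val this
    · rw [hPc P]
      exact hcent t t1 (hPo P t ht)
  obtain ⟨P⟩ : Nonempty (Sylow 2 H) := inferInstance
  -- two distinct involutions
  obtain ⟨a, b, haP, hbP, a1, b1, hab⟩ : ∃ a b : H, a ∈ P ∧ b ∈ P ∧ a ≠ 1 ∧ b ≠ 1 ∧ a ≠ b := by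
    have h4 : (P : Set H).ncard = 4 := by rw [← Nat.card_coe_set_eq]; exact hPc P
    have h3 : ((P : Set H) \ {1}).ncard = 3 := by
      rw [Set.ncard_sdiff_singleton_of_mem (one_mem P), h4]
    obtain ⟨a, ha, b, hb, hab⟩ := (Set.one_lt_ncard (Set.toFinite _)).1 (by omega : 1 < ((P : Set H) \ {1}).ncard)
    exact ⟨a, b, ha.1, hb.1, ha.2, hb.2, hab⟩
  obtain ⟨g, hg⟩ := hconj a b a1 b1 (hPo P a haP) (hPo P b hbP)
  have hgN : g ∈ Subgroup.normalizer (P : Set H) := by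
    rw [Subgroup.mem_set_normalizer_iff]
    intro h
    have ha := hPC P a haP a1
    have hb := hPC P b hbP b1
    change h ∈ (P : Subgroup H) ↔ g * h * g⁻¹ ∈ (P : Subgroup H)
    rw [show h ∈ (P : Subgroup H) ↔ h ∈ Subgroup.centralizer {a} by rw [ha], hb,
      Subgroup.mem_centralizer_singleton_iff, Subgroup.mem_centralizer_singleton_iff, ← hg]
    constructor
    · intro h'
      calc g * h * g⁻¹ * (g * a * g⁻¹) = g * (h * a) * g⁻¹ := by group
        _ = g * (a * h) * g⁻¹ := by rw [h']
        _ = _ := by group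
    · intro h'
      have : g * (h * a) * g⁻¹ = g * (a * h) * g⁻¹ := by
        calc _ = g * h * g⁻¹ * (g * a * g⁻¹) := by group
          _ = _ := h'
          _ = _ := by group
      simpa using this
  have hgP : g ∉ P := by
    intro hgP
    have : g ∈ (P : Subgroup H) := hgP
    rw [hPC P a haP a1, Subgroup.mem_centralizer_singleton_iff] at this
    apply hab
    rw [← hg, this]; group
  let N := Subgroup.normalizer (P : Set H)
  have hPN : (P : Subgroup H) ≤ N := Subgroup.le_normalizer
  have hN4 : 4 ∣ Nat.card N := by rw [← hPc P]; exact Subgroup.card_dvd_of_le hPN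
  have hN60 : Nat.card N ∣ 60 := hn ▸ Subgroup.card_subgroup_dvd_card N
  have hNne : Nat.card N ≠ 4 := by
    intro h
    have := Subgroup.eq_of_le_of_card_ge hPN (by rw [h, hPc P])
    apply hgP
    have h' : g ∈ N := hgN
    rw [← this] at h'
    exact h'
  have hN12 : Nat.card N ≤ 12 := by
    letI : MulAction N H := MulAction.compHom H
      ((MulAut.conj : H →* MulAut H).comp N.subtype)
    have hsm : ∀ (n : N) (h : H), n • h = n * h * (n : H)⁻¹ := fun n h => rfl
    have h1 := card_stab_orbit (H := N) a
    have h2 : Nat.card (MulAction.orbit N a) ≤ 3 := by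
      have h4 : (P : Set H).ncard = 4 := by rw [← Nat.card_coe_set_eq]; exact hPc P
      have h3 : ((P : Set H) \ {1}).ncard = 3 := by
        rw [Set.ncard_sdiff_singleton_of_mem (one_mem P), h4]
      rw [← h3, ← Nat.card_coe_set_eq]
      apply Nat.card_mono (Set.toFinite _)
      rintro _ ⟨n, rfl⟩
      change n • a ∈ _
      rw [hsm]
      refine ⟨?_, ?_⟩
      · exact (Subgroup.mem_set_normalizer_iff.1 n.2 a).1 haP
      · intro h
        exact a1 (conj_eq_one_iff.1 h)
    have h3 : Nat.card (MulAction.stabilizer N a) ≤ 4 := by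
      refine le_trans ?_ (hcent a a1 (hPo P a haP))
      refine Nat.card_le_card_of_injective
        (fun g => (⟨g.1.1, ?_⟩ : Subgroup.centralizer {a})) ?_
      · have := g.2
        rw [MulAction.mem_stabilizer_iff, hsm] at this
        rw [Subgroup.mem_centralizer_singleton_iff]
        exact mul_inv_eq_iff_eq_mul.1 this
      · intro a b hab
        exact Subtype.ext (Subtype.ext (Subtype.mk.inj hab))
    rw [← h1]
    exact (Nat.mul_le_mul h2 h3)
  have hN : Nat.card N = 12 := by
    generalize Nat.card N = m at *
    interval_cases m <;> omega
  have hS : Nat.card (Sylow 2 H) = 5 := by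
    have h := P.card_eq_index_normalizer
    have h' := N.card_mul_index
    rw [hN, hn] at h'
    rw [h]
    change N.index = 5
    omega
  have hK := sylow_ker_card (H := H) 2
  rw [hS, hn] at hK
  let K := (MulAction.toPermHom H (Sylow 2 H)).ker
  change Nat.card K * 5 ∣ 60 at hK
  have h12 : Nat.card K ∣ 12 := by
    obtain ⟨c, hc⟩ := hK
    exact ⟨c, by linarith⟩
  have h2 : ¬ 2 ∣ Nat.card K := by
    intro h2
    obtain ⟨x, hx⟩ := exists_prime_orderOf_dvd_card' 2 h2
    have hx' : orderOf (x : H) = 2 := by simpa using hx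
    have x1 : (x : H) ≠ 1 := by
      intro h
      rw [h] at hx'
      simp at hx'
    apply sylow_ker 2 (by omega) P
    intro t ht
    by_cases t1 : t = 1
    · rw [t1]; exact one_mem _
    · obtain ⟨g, rfl⟩ := hconj x t x1 t1 (by rw [hx']; norm_num) (hPo P t ht)
      exact (inferInstance : K.Normal).conj_mem _ x.2 g
  have hle := Nat.le_of_dvd (by norm_num) h12
  have : Nat.card K = 1 ∨ Nat.card K = 3 := by
    generalize Nat.card K = m at *
    interval_cases m <;> omega
  rcases this with h1 | h2
  · right
    refine to_alt 5 (MulAction.toPermHom H (Sylow 2 H)) ?_ hS (by rw [hn]; rfl)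
    rw [← MonoidHom.ker_eq_bot_iff]
    exact Subgroup.card_eq_one.1 h1
  · left
    exact inv2_of_normal_prime K inferInstance (by rw [h2]; norm_num)

theorem abstract_classification {H X : Type*} [Group H] [Finite H] [Finite X] [MulAction H X]
    (hfix : ∀ h : H, h ≠ 1 → Nat.card (MulAction.fixedBy X h) = 2) (hnt : Nontrivial H) :
    Inv2 H X ∨ Nonempty (H ≃* alternatingGroup (Fin 4)) ∨ Nonempty (H ≃* Equiv.Perm (Fin 4)) ∨
      Nonempty (H ≃* alternatingGroup (Fin 5)) := by
  let Y : SubMulAction H X :=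
    { carrier := {p | ∃ h : H, h ≠ 1 ∧ h • p = p}
      smul_mem' := by
        rintro g p ⟨h, h1, hp⟩
        refine ⟨g * h * g⁻¹, fun he => h1 (conj_eq_one_iff.1 he), ?_⟩
        rw [← mul_smul, inv_mul_cancel_right, mul_smul, hp] }
  have hfixY : ∀ h : H, h ≠ 1 → Nat.card (MulAction.fixedBy Y h) = 2 := by
    intro h h1
    rw [← hfix h h1]
    refine Nat.card_congr ⟨fun p => ⟨p.1.1, congrArg Subtype.val p.2⟩,
      fun p => ⟨⟨p.1, h, h1, p.2⟩, Subtype.ext p.2⟩, fun _ => rfl, fun _ => rfl⟩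
  have hst : ∀ x : Y, ∃ h : H, h ≠ 1 ∧ h • x = x := by
    rintro ⟨x, h, h1, hx⟩
    exact ⟨h, h1, Subtype.ext hx⟩
  have hYX : Inv2 H Y → Inv2 H X := by
    rintro ⟨h, h1, hh⟩
    refine ⟨h, h1, fun g p hp => ?_⟩
    exact congrArg Subtype.val (hh g ⟨p, h, h1, hp⟩ (Subtype.ext hp))
  rcases core hfixY hst hnt with h | ⟨h, x, hx⟩ | h | ⟨h, ho⟩
  · exact Or.inl (hYX h)
  · exact Or.inr (Or.inl (case12 hfixY h x hx))
  · rcases case24 (X := X) h with h | h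
    · exact Or.inl h
    · exact Or.inr (Or.inr (Or.inl h))
  · rcases case60 hfixY h ho with h | h
    · exact Or.inl (hYX h)
    · exact Or.inr (Or.inr (Or.inr h))

section matrixpart
variable {ℓ : ℕ} [Fact ℓ.Prime]

theorem mem_center_iff_entries (g : GL2 ℓ) :
    g ∈ Subgroup.center (GL2 ℓ) ↔ mat g 0 1 = 0 ∧ mat g 1 0 = 0 ∧ mat g 0 0 = mat g 1 1 := by
  rw [Matrix.GeneralLinearGroup.mem_center_iff_val_mem_range_scalar]
  change mat g ∈ _ ↔ _
  constructor
  · rintro ⟨a, ha⟩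
    rw [← ha]
    simp
  · rintro ⟨h1, h2, h3⟩
    refine ⟨mat g 1 1, ?_⟩
    ext i j
    fin_cases i <;> fin_cases j <;> simp [h1, h2, h3]

theorem det_entries (g : GL2 ℓ) : mat g 0 0 * mat g 1 1 - mat g 0 1 * mat g 1 0 ≠ 0 := by
  have := g.det_ne_zero
  rw [Matrix.det_fin_two] at this
  exact this

theorem mat_mul (g h : GL2 ℓ) : mat (g * h) = mat g * mat h := rfl

theorem toPGL_eq_one (g : GL2 ℓ) : toPGL ℓ g = 1 ↔ g ∈ Subgroup.center (GL2 ℓ) := by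
  rw [toPGL]
  exact QuotientGroup.eq_one_iff g

theorem center_conj (x g : GL2 ℓ) :
    x * g * x⁻¹ ∈ Subgroup.center (GL2 ℓ) ↔ g ∈ Subgroup.center (GL2 ℓ) := by
  constructor
  · intro h
    have := (inferInstance : (Subgroup.center (GL2 ℓ)).Normal).conj_mem _ h x⁻¹
    have e : x⁻¹ * (x * g * x⁻¹) * x⁻¹⁻¹ = g := by group
    rwa [e] at this
  · intro h
    exact (inferInstance : (Subgroup.center (GL2 ℓ)).Normal).conj_mem _ h x

theorem diag_smul (d : GL2 ℓ) (hd : IsDiag d) (hne : mat d 0 0 ≠ mat d 1 1)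
    (p : OnePoint (ZMod ℓ)) : d • p = p ↔ p = OnePoint.infty ∨ p = ((0 : ZMod ℓ) : OnePoint (ZMod ℓ)) := by
  obtain ⟨h1, h2⟩ := hd
  have hdet := det_entries d
  change d 0 1 = 0 at h1
  change d 1 0 = 0 at h2
  change d 0 0 ≠ d 1 1 at hne
  change d 0 0 * d 1 1 - d 0 1 * d 1 0 ≠ 0 at hdet
  rw [h1, h2] at hdet
  have h11 : d 1 1 ≠ 0 := by rintro h; simp [h] at hdet
  cases p with
  | infty => simp [OnePoint.smul_infty_eq_ite, h2]
  | coe k =>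
    simp only [OnePoint.smul_some_eq_ite, h1, h2, zero_mul, zero_add, add_zero, h11, if_false,
      OnePoint.coe_eq_coe, OnePoint.coe_ne_infty, false_or]
    rw [div_eq_iff h11, mul_comm, ← sub_eq_zero, ← mul_sub, mul_eq_zero, sub_eq_zero]
    simp [hne]

noncomputable def phi (ℓ : ℕ) [Fact ℓ.Prime] : PGL2 ℓ →* Equiv.Perm (OnePoint (ZMod ℓ)) :=
  QuotientGroup.lift _ (MulAction.toPermHom (GL2 ℓ) (OnePoint (ZMod ℓ))) (by
    intro g hg
    rw [mem_center_iff_entries] at hg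
    obtain ⟨h1, h2, h3⟩ := hg
    have hdet := det_entries g
    change g 0 1 = 0 at h1
    change g 1 0 = 0 at h2
    change g 0 0 = g 1 1 at h3
    change g 0 0 * g 1 1 - g 0 1 * g 1 0 ≠ 0 at hdet
    have h11 : g 1 1 ≠ 0 := by rintro h; simp [h, h2] at hdet
    ext p
    change g • p = p
    cases p with
    | infty => simp [OnePoint.smul_infty_eq_ite, h2]
    | coe k =>
      simp only [OnePoint.smul_some_eq_ite, h1, h2, h3, zero_mul, zero_add, add_zero, h11, if_false]
      rw [mul_div_cancel_left₀ _ h11])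

theorem phi_toPGL (g : GL2 ℓ) (p : OnePoint (ZMod ℓ)) : phi ℓ (toPGL ℓ g) p = g • p := rfl

theorem InNsp_of_perm (y : GL2 ℓ)
    (h0 : y • (OnePoint.infty : OnePoint (ZMod ℓ)) = OnePoint.infty ∨
      y • (OnePoint.infty : OnePoint (ZMod ℓ)) = ((0 : ZMod ℓ) : OnePoint (ZMod ℓ)))
    (h1 : y • ((0 : ZMod ℓ) : OnePoint (ZMod ℓ)) = OnePoint.infty ∨
      y • ((0 : ZMod ℓ) : OnePoint (ZMod ℓ)) = ((0 : ZMod ℓ) : OnePoint (ZMod ℓ))) :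
    InNsp y := by
  have hdet := det_entries y
  change y 0 0 * y 1 1 - y 0 1 * y 1 0 ≠ 0 at hdet
  change (y 0 1 = 0 ∧ y 1 0 = 0) ∨ (y 0 0 = 0 ∧ y 1 1 = 0)
  rw [OnePoint.smul_infty_eq_ite] at h0
  rw [OnePoint.smul_some_eq_ite] at h1
  simp only [mul_zero, zero_add] at h1
  by_cases a : y 1 0 = 0
  · by_cases b : y 1 1 = 0
    · simp [a, b] at hdet
    · simp [b] at h1
      exact Or.inl ⟨h1, a⟩
  · by_cases b : y 1 1 = 0
    · simp [a] at h0
      exact Or.inr ⟨h0, b⟩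
    · simp [a] at h0
      simp [b] at h1
      simp [h0, h1] at hdet

theorem dvd_of_order (m : ℕ) (hm : m.Prime) (G : Subgroup (GL2 ℓ))
    (hloc : ∀ g ∈ G, ∃ x : GL2 ℓ, IsDiag (x * g * x⁻¹))
    (h : projImage G) (h1 : h ≠ 1) (hp : h ^ m = 1) : m ∣ ℓ - 1 := by
  obtain ⟨_, g, hg, rfl⟩ := h
  obtain ⟨x, hx⟩ := hloc g hg
  have h1' : toPGL ℓ g ≠ 1 := fun he => h1 (Subtype.ext he)
  have hp' : toPGL ℓ (g ^ m) = 1 := by rw [map_pow]; exact congrArg Subtype.val hp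
  rw [Ne, toPGL_eq_one, ← center_conj x] at h1'
  rw [toPGL_eq_one, ← center_conj x, ← conj_pow] at hp'
  set y := x * g * x⁻¹ with hy
  rw [mem_center_iff_entries] at h1' hp'
  have hdet := det_entries y
  have hyd : mat y = Matrix.diagonal ![mat y 0 0, mat y 1 1] := by
    ext i j
    fin_cases i <;> fin_cases j <;> simp [hx.1, hx.2]
  have hym : mat (y ^ m) = Matrix.diagonal ![mat y 0 0 ^ m, mat y 1 1 ^ m] := by
    have : mat (y ^ m) = mat y ^ m := rfl
    rw [this, hyd, Matrix.diagonal_pow]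
    ext i j
    fin_cases i <;> fin_cases j <;> simp
  have e := hp'.2.2
  rw [hym] at e
  simp at e
  have hne : mat y 0 0 ≠ mat y 1 1 := fun he => h1' ⟨hx.1, hx.2, he⟩
  rw [hx.1, zero_mul, sub_zero] at hdet
  have ha : mat y 0 0 ≠ 0 := left_ne_zero_of_mul hdet
  have hb : mat y 1 1 ≠ 0 := right_ne_zero_of_mul hdet
  let u : (ZMod ℓ)ˣ := Units.mk0 (mat y 0 0 / mat y 1 1) (div_ne_zero ha hb)
  have hu : orderOf u = m := by
    haveI := Fact.mk hm
    apply orderOf_eq_prime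
    · apply Units.ext
      simp [u, div_pow, e, hb]
    · intro hu
      apply hne
      have := congrArg Units.val hu
      simp only [u, Units.val_mk0, Units.val_one] at this
      exact (div_eq_one_iff_eq hb).1 this
  rw [← ZMod.card_units ℓ, ← hu]
  exact orderOf_dvd_card

theorem anti_square (S : GL2 ℓ) (z : GL2 ℓ) (hz : IsDiag (z * S * z⁻¹)) (hS : IsAnti S) :
    ∃ c : ZMod ℓ, mat S 0 1 * mat S 1 0 = c ^ 2 := by
  have ht : (mat (z * S * z⁻¹)).trace = (mat S).trace := Matrix.trace_units_conj z (mat S)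
  have hd : (mat (z * S * z⁻¹)).det = (mat S).det := Matrix.det_units_conj z (mat S)
  rw [Matrix.trace_fin_two, Matrix.trace_fin_two, hS.1, hS.2] at ht
  rw [Matrix.det_fin_two, Matrix.det_fin_two, hS.1, hS.2, hz.1, hz.2] at hd
  refine ⟨mat (z * S * z⁻¹) 0 0, ?_⟩
  linear_combination (-mat (z * S * z⁻¹) 0 0) * ht + hd

theorem dvd_of_dihedral (j : ℕ) (hℓ : ℓ ≠ 2) (G : Subgroup (GL2 ℓ))
    (hloc : ∀ g ∈ G, ∃ x : GL2 ℓ, IsDiag (x * g * x⁻¹))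
    (r s : projImage G) (hr : r ^ (2 * 2 ^ j) = 1) (hr' : r ^ (2 ^ j) ≠ 1) (hs : s ^ 2 = 1)
    (hs1 : s ≠ 1) (hsr : s * r ^ (2 ^ j) ≠ 1) (hsr2 : (s * r) ^ 2 = 1) :
    2 ^ (j + 2) ∣ ℓ - 1 := by
  obtain ⟨_, R₀, hR₀, rfl⟩ := r
  obtain ⟨_, S₀, hS₀, rfl⟩ := s
  obtain ⟨x, hx⟩ := hloc R₀ hR₀
  generalize hk : 2 ^ j = k at *
  have hr : toPGL ℓ (R₀ ^ (2 * k)) = 1 := by rw [map_pow]; exact congrArg Subtype.val hr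
  have hr' : toPGL ℓ (R₀ ^ k) ≠ 1 := by rw [map_pow]; exact fun he => hr' (Subtype.ext he)
  have hs : toPGL ℓ (S₀ ^ 2) = 1 := by rw [map_pow]; exact congrArg Subtype.val hs
  have hs1 : toPGL ℓ S₀ ≠ 1 := fun he => hs1 (Subtype.ext he)
  have hsr : toPGL ℓ (S₀ * R₀ ^ k) ≠ 1 := by
    rw [map_mul, map_pow]; exact fun he => hsr (Subtype.ext he)
  have hsr2 : toPGL ℓ ((S₀ * R₀) ^ 2) = 1 := by
    rw [map_pow, map_mul]; exact congrArg Subtype.val hsr2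
  obtain ⟨z₁, hz₁⟩ := hloc S₀ hS₀
  obtain ⟨z₂, hz₂⟩ := hloc (S₀ * R₀) (mul_mem hS₀ hR₀)
  obtain ⟨R, hR⟩ : ∃ R, R = x * R₀ * x⁻¹ := ⟨_, rfl⟩
  obtain ⟨S, hS⟩ : ∃ S, S = x * S₀ * x⁻¹ := ⟨_, rfl⟩
  have hSR : S * R = x * (S₀ * R₀) * x⁻¹ := by rw [hS, hR]; group
  rw [toPGL_eq_one, ← center_conj x, ← conj_pow, ← hR] at hr
  rw [Ne, toPGL_eq_one, ← center_conj x, ← conj_pow, ← hR] at hr'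
  rw [toPGL_eq_one, ← center_conj x, ← conj_pow, ← hS] at hs
  rw [Ne, toPGL_eq_one, ← center_conj x, ← hS] at hs1
  rw [Ne, toPGL_eq_one, ← center_conj x, ← conj_mul, ← conj_pow, ← hR, ← hS] at hsr
  rw [toPGL_eq_one, ← center_conj x, ← conj_pow, ← hSR] at hsr2
  replace hz₁ : IsDiag ((z₁ * x⁻¹) * S * (z₁ * x⁻¹)⁻¹) := by
    have : (z₁ * x⁻¹) * S * (z₁ * x⁻¹)⁻¹ = z₁ * S₀ * z₁⁻¹ := by rw [hS]; group
    rwa [this]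
  replace hz₂ : IsDiag ((z₂ * x⁻¹) * (S * R) * (z₂ * x⁻¹)⁻¹) := by
    have : (z₂ * x⁻¹) * (S * R) * (z₂ * x⁻¹)⁻¹ = z₂ * (S₀ * R₀) * z₂⁻¹ := by rw [hSR]; group
    rwa [this]
  rw [← hR] at hx
  rw [mem_center_iff_entries] at hr hr' hs hs1 hsr hsr2
  have hdetR := det_entries R
  have hdetS := det_entries S
  have hRd : mat R = Matrix.diagonal ![mat R 0 0, mat R 1 1] := by
    ext i j
    fin_cases i <;> fin_cases j <;> simp [hx.1, hx.2]
  have hRm : ∀ m, mat (R ^ m) = Matrix.diagonal ![mat R 0 0 ^ m, mat R 1 1 ^ m] := by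
    intro m
    have : mat (R ^ m) = mat R ^ m := rfl
    rw [this, hRd, Matrix.diagonal_pow]
    ext i j
    fin_cases i <;> fin_cases j <;> simp
  simp only [hRm, mat_mul, pow_two, Matrix.mul_apply, Fin.sum_univ_two, hx.1, hx.2] at hr hr' hs hsr hsr2
  rw [hx.1] at hdetR
  have hanti0 : ∀ T : GL2 ℓ, T = S * R → (mat T 0 0 = mat S 0 0 * mat R 0 0 ∧
      mat T 0 1 = mat S 0 1 * mat R 1 1 ∧ mat T 1 0 = mat S 1 0 * mat R 0 0 ∧
      mat T 1 1 = mat S 1 1 * mat R 1 1) := by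
    rintro T rfl
    simp [mat_mul, Matrix.mul_apply, Fin.sum_univ_two, hx.1, hx.2]
  obtain ⟨t00, t01, t10, t11⟩ := hanti0 _ rfl
  have sq1 := anti_square S _ hz₁
  have sq2 := anti_square (S * R) _ hz₂
  unfold IsAnti at sq1 sq2
  rw [t00, t11, t01, t10] at sq2
  simp at hr hr' hsr
  generalize mat R 0 0 = a at *
  generalize mat R 1 1 = b at *
  generalize mat S 0 0 = p at *
  generalize mat S 0 1 = q at *
  generalize mat S 1 0 = t at *
  generalize mat S 1 1 = w at *
  have ha : a ≠ 0 := by rintro rfl; simp at hdetR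
  have hb : b ≠ 0 := by rintro rfl; simp at hdetR
  have hab : a ≠ b := by rintro rfl; exact hr' rfl
  have hk1 : a ^ k = - b ^ k := by
    have : (a ^ k - b ^ k) * (a ^ k + b ^ k) = 0 := by
      linear_combination hr
    rcases mul_eq_zero.1 this with h | h
    · exact absurd (sub_eq_zero.1 h) hr'
    · linear_combination h
  have hpw : p = 0 ∧ w = 0 := by
    by_cases hqt : q = 0 ∧ t = 0
    · exfalso
      obtain ⟨rfl, rfl⟩ := hqt
      have hne : p ≠ w := fun h => hs1 ⟨rfl, rfl, h⟩
      have : (p - w) * (p + w) = 0 := by linear_combination hs.2.2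
      rcases mul_eq_zero.1 this with h | h
      · exact hne (sub_eq_zero.1 h)
      · have hp : p = - w := by linear_combination h
        refine hsr (Or.inl rfl) (Or.inl rfl) ?_
        simp [hp, hk1]
    · have h1 : p + w = 0 := by
        by_contra h
        apply hqt
        constructor
        · have : q * (p + w) = 0 := by linear_combination hs.1
          exact (mul_eq_zero.1 this).resolve_right h
        · have : t * (p + w) = 0 := by linear_combination hs.2.1
          exact (mul_eq_zero.1 this).resolve_right h
      have h2 : p * a + w * b = 0 := by
        by_contra h
        apply hqt
        constructor
        · have : (q * b) * (p * a + w * b) = 0 := by linear_combination hsr2.1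
          have := (mul_eq_zero.1 this).resolve_right h
          exact (mul_eq_zero.1 this).resolve_right hb
        · have : (t * a) * (p * a + w * b) = 0 := by linear_combination hsr2.2.1
          have := (mul_eq_zero.1 this).resolve_right h
          exact (mul_eq_zero.1 this).resolve_right ha
      have h3 : p * (a - b) = 0 := by linear_combination h2 - b * h1
      have h4 : p = 0 := (mul_eq_zero.1 h3).resolve_right (sub_ne_zero.2 hab)
      exact ⟨h4, by simpa [h4] using h1⟩
  obtain ⟨rfl, rfl⟩ := hpw
  obtain ⟨c, hc⟩ := sq1 ⟨rfl, rfl⟩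
  obtain ⟨d, hd⟩ := sq2 (by simp)
  have hc0 : c ≠ 0 := by
    rintro rfl
    apply hdetS
    linear_combination - hc
  have hd0 : d ≠ 0 := by
    rintro rfl
    have : (c ^ 2) * (a * b) = 0 := by linear_combination hd - a * b * hc
    exact (mul_ne_zero (pow_ne_zero 2 hc0) (mul_ne_zero ha hb)) this
  let u : (ZMod ℓ)ˣ := Units.mk0 (d / (c * b)) (div_ne_zero hd0 (mul_ne_zero hc0 hb))
  have hu2 : (d / (c * b)) ^ 2 = a / b := by
    rw [div_pow, div_eq_div_iff (pow_ne_zero 2 (mul_ne_zero hc0 hb)) hb]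
    linear_combination (-b) * hd + a * b ^ 2 * hc
  have huk : (d / (c * b)) ^ (2 * k) = -1 := by
    rw [pow_mul, hu2, div_pow, hk1, neg_div, div_self (pow_ne_zero _ hb)]
  have h2 : (2 : ZMod ℓ) ≠ 0 := by
    intro h
    have : ((2 : ℕ) : ZMod ℓ) = 0 := by exact_mod_cast h
    rw [ZMod.natCast_eq_zero_iff] at this
    exact hℓ ((Nat.prime_dvd_prime_iff_eq Fact.out Nat.prime_two).1 this)
  have hu : orderOf u = 2 ^ (j + 1 + 1) := by
    apply orderOf_eq_prime_pow
    · intro he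
      have := congrArg Units.val he
      simp only [u, Units.val_pow_eq_pow_val, Units.val_mk0, Units.val_one] at this
      rw [pow_succ', hk, huk] at this
      apply h2
      linear_combination -this
    · apply Units.ext
      simp only [u, Units.val_pow_eq_pow_val, Units.val_mk0, Units.val_one]
      rw [pow_succ (2 : ℕ) (j + 1), pow_succ' (2 : ℕ) j, hk, pow_mul, huk]
      ring
  rw [← ZMod.card_units ℓ, show j + 2 = j + 1 + 1 from rfl, ← hu]
  exact orderOf_dvd_card

end matrixpart

theorem A4_facts : (∃ r s : alternatingGroup (Fin 4), r ^ 2 = 1 ∧ r ^ 1 ≠ 1 ∧ s ^ 2 = 1 ∧ s ≠ 1 ∧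
    s * r ^ 1 ≠ 1 ∧ (s * r) ^ 2 = 1) ∧ ∃ r : alternatingGroup (Fin 4), r ≠ 1 ∧ r ^ 3 = 1 :=
  ⟨⟨⟨Equiv.swap 0 1 * Equiv.swap 2 3, Equiv.Perm.mem_alternatingGroup.2 (by decide)⟩,
    ⟨Equiv.swap 0 2 * Equiv.swap 1 3, Equiv.Perm.mem_alternatingGroup.2 (by decide)⟩, by decide⟩,
   ⟨⟨Equiv.swap 0 1 * Equiv.swap 1 2, Equiv.Perm.mem_alternatingGroup.2 (by decide)⟩, by decide⟩⟩

theorem S4_facts : (∃ r s : Equiv.Perm (Fin 4), r ^ 4 = 1 ∧ r ^ 2 ≠ 1 ∧ s ^ 2 = 1 ∧ s ≠ 1 ∧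
    s * r ^ 2 ≠ 1 ∧ (s * r) ^ 2 = 1) ∧ ∃ r : Equiv.Perm (Fin 4), r ≠ 1 ∧ r ^ 3 = 1 :=
  ⟨⟨finRotate 4, Equiv.swap 0 2, by decide⟩, ⟨Equiv.swap 0 1 * Equiv.swap 1 2, by decide⟩⟩

theorem A5_facts : (∃ r s : alternatingGroup (Fin 5), r ^ 2 = 1 ∧ r ^ 1 ≠ 1 ∧ s ^ 2 = 1 ∧ s ≠ 1 ∧
    s * r ^ 1 ≠ 1 ∧ (s * r) ^ 2 = 1) ∧ (∃ r : alternatingGroup (Fin 5), r ≠ 1 ∧ r ^ 3 = 1) ∧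
    ∃ r : alternatingGroup (Fin 5), r ≠ 1 ∧ r ^ 5 = 1 :=
  ⟨⟨⟨Equiv.swap 0 1 * Equiv.swap 2 3, Equiv.Perm.mem_alternatingGroup.2 (by decide)⟩,
    ⟨Equiv.swap 0 2 * Equiv.swap 1 3, Equiv.Perm.mem_alternatingGroup.2 (by decide)⟩, by decide⟩,
   ⟨⟨Equiv.swap 0 1 * Equiv.swap 1 2, Equiv.Perm.mem_alternatingGroup.2 (by decide)⟩, by decide⟩,
   ⟨⟨finRotate 5, Equiv.Perm.mem_alternatingGroup.2 (by decide)⟩, by decide⟩⟩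

section transfer
variable {ℓ : ℕ} [Fact ℓ.Prime]

theorem dvd_of_order_iso {A : Type*} [Group A] (m : ℕ) (hm : m.Prime) (G : Subgroup (GL2 ℓ))
    (hloc : ∀ g ∈ G, ∃ x : GL2 ℓ, IsDiag (x * g * x⁻¹)) (e : projImage G ≃* A)
    (h : ∃ h : A, h ≠ 1 ∧ h ^ m = 1) : m ∣ ℓ - 1 := by
  obtain ⟨h, h1, h2⟩ := h
  exact dvd_of_order m hm G hloc (e.symm h) (by simpa using h1) (by rw [← map_pow, h2, map_one])

theorem dvd_of_dihedral_iso {A : Type*} [Group A] (j : ℕ) (hℓ : ℓ ≠ 2) (G : Subgroup (GL2 ℓ))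
    (hloc : ∀ g ∈ G, ∃ x : GL2 ℓ, IsDiag (x * g * x⁻¹)) (e : projImage G ≃* A)
    (h : ∃ r s : A, r ^ (2 * 2 ^ j) = 1 ∧ r ^ (2 ^ j) ≠ 1 ∧ s ^ 2 = 1 ∧ s ≠ 1 ∧
      s * r ^ (2 ^ j) ≠ 1 ∧ (s * r) ^ 2 = 1) : 2 ^ (j + 2) ∣ ℓ - 1 := by
  obtain ⟨r, s, h1, h2, h3, h4, h5, h6⟩ := h
  have inj : ∀ a : A, e.symm a = 1 ↔ a = 1 := fun a => by simp
  refine dvd_of_dihedral j hℓ G hloc (e.symm r) (e.symm s) ?_ ?_ ?_ ?_ ?_ ?_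
  · rw [← map_pow, inj]; exact h1
  · rw [← map_pow, Ne, inj]; exact h2
  · rw [← map_pow, inj]; exact h3
  · rw [Ne, inj]; exact h4
  · rw [← map_pow, ← map_mul, Ne, inj]; exact h5
  · rw [← map_mul, ← map_pow, inj]; exact h6

end transfer

/-- If every element of `G ≤ GL₂(F_ℓ)` is diagonalizable over `F_ℓ`,
then `G` is contained in a conjugate of `C_sp`, or of `N_sp`, or its projective image
is exceptional with the stated congruence on `ℓ`. -/
theorem local_global_split_cartan
    {ℓ : ℕ} [Fact ℓ.Prime] (hℓ : ℓ ≠ 2) (G : Subgroup (GL2 ℓ))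
    (hloc : ∀ g ∈ G, ∃ x : GL2 ℓ, IsDiag (x * g * x⁻¹)) :
    (∃ x : GL2 ℓ, ∀ g ∈ G, InCsp (x * g * x⁻¹)) ∨
    (∃ x : GL2 ℓ, ∀ g ∈ G, InNsp (x * g * x⁻¹)) ∨
    (IsA4 (projImage G) ∧ ℓ % 12 = 1) ∨
    (IsS4 (projImage G) ∧ ℓ % 24 = 1) ∨
    (IsA5 (projImage G) ∧ ℓ % 60 = 1) := by
  have hp : 2 ≤ ℓ := (Fact.out : ℓ.Prime).two_le
  by_cases hnt : Nontrivial (projImage G)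
  swap
  · left
    refine ⟨1, fun g hg => ?_⟩
    have hsub := not_nontrivial_iff_subsingleton.1 hnt
    have h1 : (⟨toPGL ℓ g, g, hg, rfl⟩ : projImage G) = 1 := Subsingleton.elim _ _
    have h2 : toPGL ℓ g = 1 := congrArg Subtype.val h1
    rw [toPGL_eq_one, ← center_conj 1, mem_center_iff_entries] at h2
    exact ⟨h2.1, h2.2.1⟩
  right
  let act : MulAction (projImage G) (OnePoint (ZMod ℓ)) :=
    MulAction.compHom _ ((phi ℓ).comp (projImage G).subtype)
  have hsm : ∀ (g : GL2 ℓ) (hg : g ∈ G) (p : OnePoint (ZMod ℓ)),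
      (⟨toPGL ℓ g, g, hg, rfl⟩ : projImage G) • p = g • p := fun g hg p => rfl
  have : Finite (OnePoint (ZMod ℓ)) := inferInstanceAs (Finite (Option (ZMod ℓ)))
  have hfp : ∀ h : projImage G, h ≠ 1 → ∃ x : GL2 ℓ, ∀ p : OnePoint (ZMod ℓ), h • p = p ↔
      (x • p = OnePoint.infty ∨ x • p = ((0 : ZMod ℓ) : OnePoint (ZMod ℓ))) := by
    rintro ⟨_, g, hg, rfl⟩ h1
    obtain ⟨x, hx⟩ := hloc g hg
    refine ⟨x, fun p => ?_⟩
    have h1' : toPGL ℓ g ≠ 1 := fun he => h1 (Subtype.ext he)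
    rw [Ne, toPGL_eq_one, ← center_conj x, mem_center_iff_entries] at h1'
    rw [hsm g hg, ← diag_smul _ hx (fun he => h1' ⟨hx.1, hx.2, he⟩), ← mul_smul,
      inv_mul_cancel_right, mul_smul]
    exact (smul_left_cancel_iff x).symm
  have hfix : ∀ h : projImage G, h ≠ 1 →
      Nat.card (MulAction.fixedBy (OnePoint (ZMod ℓ)) h) = 2 := by
    intro h h1
    obtain ⟨x, hx⟩ := hfp h h1
    have : MulAction.fixedBy (OnePoint (ZMod ℓ)) h =
        {x⁻¹ • OnePoint.infty, x⁻¹ • ((0 : ZMod ℓ) : OnePoint (ZMod ℓ))} := by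
      ext p
      rw [MulAction.mem_fixedBy, hx p]
      simp [eq_inv_smul_iff]
    rw [this, Nat.card_coe_set_eq, Set.ncard_pair]
    intro he
    exact OnePoint.infty_ne_coe _ (smul_left_cancel _ he)
  rcases abstract_classification hfix hnt with h | ⟨⟨e⟩⟩ | ⟨⟨e⟩⟩ | ⟨⟨e⟩⟩
  · left
    obtain ⟨h, h1, hinv⟩ := h
    obtain ⟨x, hx⟩ := hfp h h1
    refine ⟨x, fun g hg => ?_⟩
    apply InNsp_of_perm
    · have h2 := hinv ⟨toPGL ℓ g, g, hg, rfl⟩ (x⁻¹ • OnePoint.infty) (by rw [hx]; simp)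
      rw [hsm g hg, hx] at h2
      simpa only [mul_smul] using h2
    · have h2 := hinv ⟨toPGL ℓ g, g, hg, rfl⟩ (x⁻¹ • ((0 : ZMod ℓ) : OnePoint (ZMod ℓ)))
        (by rw [hx]; simp)
      rw [hsm g hg, hx] at h2
      simpa only [mul_smul] using h2
  · right; left
    refine ⟨⟨e⟩, ?_⟩
    have h3 := dvd_of_order_iso 3 (by norm_num) G hloc e A4_facts.2
    have h4 := dvd_of_dihedral_iso 0 hℓ G hloc e A4_facts.1
    norm_num at h4
    omega
  · right; right; left
    refine ⟨⟨e⟩, ?_⟩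
    have h3 := dvd_of_order_iso 3 (by norm_num) G hloc e S4_facts.2
    have h4 := dvd_of_dihedral_iso 1 hℓ G hloc e S4_facts.1
    norm_num at h4
    omega
  · right; right; right
    refine ⟨⟨e⟩, ?_⟩
    have h3 := dvd_of_order_iso 3 (by norm_num) G hloc e A5_facts.2.1
    have h5 := dvd_of_order_iso 5 (by norm_num) G hloc e A5_facts.2.2
    have h4 := dvd_of_dihedral_iso 0 hℓ G hloc e A5_facts.1
    norm_num at h4
    omega
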